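/- Let (X,ν) and (Y,μ) be σ-finite measure spaces, and let g_n, g be measurable functions on the product space (X×Y, ν⊗μ) such that g_n → g almost uniformly on X×Y. Then for ν-almost every x ∈ X, the sections satisfy g_n(x,·) → g(x,·) almost uniformly on Y. -/

import Mathlib

/-!
Choose exceptional sets `(G k)ᶜ` in the product whose measures are summable. By Tonelli,
`∫ ∑ₖ μ ((G k)ᶜ)ₓ dν(x) = ∑ₖ (ν ⊗ μ) (G k)ᶜ < ∞`, so for almost every `x` the section measures
`μ ((G k)ᶜ)ₓ` are summable and hence tend to `0`. Moreover, for almost every `x`, the essential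
supremum of each section of `(g - gn n) χ_{G k}` is at most the essential supremum on the product,
for all of the countably many pairs `(k, n)` at once. The sections of the sets `G k` therefore
witness almost uniform convergence of the sections of `gn`.
-/

open MeasureTheory Filter

/-- Almost uniform convergence (in Egorov's sense) of a sequence of functions. -/
def AUConv {α : Type*} [MeasurableSpace α] (μ : Measure α) (F : ℕ → α → ℂ) (f : α → ℂ) : Prop :=
  ∀ ε : ℝ, 0 < ε → ∃ G : Set α, MeasurableSet G ∧ μ Gᶜ ≤ ENNReal.ofReal ε ∧
    Tendsto (fun n => eLpNorm (G.indicator (f - F n)) ⊤ μ) atTop (nhds 0)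

/-- Almost every section of a function has essential supremum norm at most that of the function. -/
lemma ae_eLpNorm_top_section_le {X Y : Type*} [MeasurableSpace X] [MeasurableSpace Y]
    (ν : Measure X) (μ : Measure Y) [SFinite μ] (f : X × Y → ℂ) :
    ∀ᵐ x ∂ν, eLpNorm (fun y => f (x, y)) ⊤ μ ≤ eLpNorm f ⊤ (ν.prod μ) := by
  have h := Measure.ae_ae_of_ae_prod (ae_le_eLpNormEssSup (f := f) (μ := ν.prod μ))
  filter_upwards [h] with x hx
  simp only [eLpNorm_exponent_top]
  exact eLpNormEssSup_le_of_ae_enorm_bound hx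

/-- If `(X,ν)` and `(Y,μ)` are σ-finite measure spaces and measurable
functions `g_n → g` almost uniformly on `(X × Y, ν ⊗ μ)`, then for ν-almost every `x ∈ X`
the sections satisfy `g_n(x,·) → g(x,·)` almost uniformly on `Y`. -/
theorem stmt7 {X Y : Type*} [MeasurableSpace X] [MeasurableSpace Y]
    (ν : Measure X) (μ : Measure Y) [SigmaFinite ν] [SigmaFinite μ]
    (gn : ℕ → X × Y → ℂ) (g : X × Y → ℂ)
    (hgn : ∀ n, Measurable (gn n)) (hg : Measurable g)
    (hconv : AUConv (ν.prod μ) gn g) :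
    ∀ᵐ x ∂ν, AUConv μ (fun n y => gn n (x, y)) (fun y => g (x, y)) := by
  obtain ⟨δ, hδ, hsum⟩ := ENNReal.exists_pos_sum_of_countable (ε := 1) one_ne_zero ℕ
  choose G hG hGμ hGt using fun k => hconv (δ k) (by exact_mod_cast hδ k)
  have hmeas : ∀ k, Measurable fun x => μ (Prod.mk x ⁻¹' (G k)ᶜ) := fun k =>
    measurable_measure_prodMk_left (hG k).compl
  have hint : ∫⁻ x, ∑' k, μ (Prod.mk x ⁻¹' (G k)ᶜ) ∂ν ≠ ⊤ := by
    rw [lintegral_tsum fun k => (hmeas k).aemeasurable]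
    refine ne_top_of_le_ne_top (hsum.trans ENNReal.one_lt_top).ne (ENNReal.tsum_le_tsum fun k => ?_)
    rw [← Measure.prod_apply (hG k).compl]
    simpa using hGμ k
  have hfin := ae_lt_top (Measurable.tsum hmeas) hint
  have hsec : ∀ᵐ x ∂ν, ∀ k n, eLpNorm (fun y => (G k).indicator (g - gn n) (x, y)) ⊤ μ ≤
      eLpNorm ((G k).indicator (g - gn n)) ⊤ (ν.prod μ) :=
    ae_all_iff.2 fun k => ae_all_iff.2 fun n =>
      ae_eLpNorm_top_section_le ν μ _
  filter_upwards [hfin, hsec] with x hx hxs ε hε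
  have hlim := ENNReal.tendsto_atTop_zero_of_tsum_ne_top hx.ne
  obtain ⟨k, hk⟩ := (hlim.eventually (ge_mem_nhds (ENNReal.ofReal_pos.2 hε))).exists
  exact ⟨Prod.mk x ⁻¹' G k, measurable_prodMk_left (hG k), hk,
    tendsto_of_tendsto_of_tendsto_of_le_of_le tendsto_const_nhds (hGt k)
      (fun _ => zero_le) fun n => hxs k n⟩
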